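/- arXiv:2106.15676 — 2 statements merged into one kernel-verified Lean document; each statement's English description precedes it below -/
import Mathlib

section
/- Let d ≥ 2, κ ≥ 1, and let A₁,…,A_κ ∈ SL(d,ℝ). For ω ∈ Σ_κ := {1,…,κ}^ℤ and n ≥ 1 write A⁽ⁿ⁾(ω) := A_{ω_{n−1}} ⋯ A_{ω_1} A_{ω_0}. Assume: (1) the closure in SL(d,ℝ) of the subgroup generated by {A₁,…,A_κ} is not compact; (2) the family (A₁,…,A_κ) is strongly projectively accessible. Then there exist a residual subset 𝓡 ⊆ Σ_κ and a dense subset 𝓓 ⊆ ℝ^d ∖ {0} such that for every ω ∈ 𝓡 and every v ∈ 𝓓 one has liminf_{n→∞} (1/n) log ‖A⁽ⁿ⁾(ω) v‖ < limsup_{n→∞} (1/n) log ‖A⁽ⁿ⁾(ω) v‖ (Euclidean norm on ℝ^d). -/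
open Filter Topology Metric

noncomputable section

/-- The action of a `d × d` real matrix on Euclidean space `ℝ^d`. -/
def mvec {d : ℕ} (B : Matrix (Fin d) (Fin d) ℝ) (v : EuclideanSpace ℝ (Fin d)) :
    EuclideanSpace ℝ (Fin d) :=
  Matrix.toEuclideanLin B v

/-- The random product `A⁽ⁿ⁾(ω) = A_{ω_{n-1}} ⋯ A_{ω_1} A_{ω_0}` of the matrices `A i`
along the two-sided sequence `ω`. -/
def cocycleProd {d κ : ℕ} (A : Fin κ → Matrix.SpecialLinearGroup (Fin d) ℝ)
    (ω : ℤ → Fin κ) : ℕ → Matrix.SpecialLinearGroup (Fin d) ℝ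
  | 0 => 1
  | n + 1 => A (ω n) * cocycleProd A ω n

/-- The projectivized action `g_B(v) = B·v / ‖B·v‖` on the unit sphere. -/
def projMap {d : ℕ} (B : Matrix (Fin d) (Fin d) ℝ) (v : EuclideanSpace ℝ (Fin d)) :
    EuclideanSpace ℝ (Fin d) :=
  ‖mvec B v‖⁻¹ • mvec B v

/-- The composition `g_{A_{ω_{p-1}}} ∘ ⋯ ∘ g_{A_{ω_0}}` of the projectivized maps along
a finite word `w = (ω₀, …, ω_{p-1})`. -/
def projWordComp {d κ : ℕ} (A : Fin κ → Matrix.SpecialLinearGroup (Fin d) ℝ)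
    (w : List (Fin κ)) (v : EuclideanSpace ℝ (Fin d)) : EuclideanSpace ℝ (Fin d) :=
  w.foldl (fun u i => projMap (A i : Matrix (Fin d) (Fin d) ℝ) u) v

/-- The unit sphere `S^{d-1} ⊆ ℝ^d`, a double cover of the projective space. -/
def unitSphere (d : ℕ) : Set (EuclideanSpace ℝ (Fin d)) :=
  Metric.sphere (0 : EuclideanSpace ℝ (Fin d)) 1

/-- Strong projective accessibility of the family `(A₁, …, A_κ)`, formulated on the
unit sphere: for every `ε > 0` there is `K(ε)` such that any `ε`-ball around a direction
can be mapped, by the projective action of a word of length at most `K(ε)`, onto a set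
containing a definite sub-ball of any prescribed ball of radius `δ ≤ ε`. -/
def StronglyProjectivelyAccessible {d κ : ℕ}
    (A : Fin κ → Matrix.SpecialLinearGroup (Fin d) ℝ) : Prop :=
  ∀ ε : ℝ, 0 < ε → ∃ K : ℕ, ∀ v₁ ∈ unitSphere d, ∀ v₂ ∈ unitSphere d,
    ∀ δ : ℝ, 0 < δ → δ ≤ ε →
      ∃ p ≤ K, ∃ w : List (Fin κ), w.length = p ∧ ∃ u ∈ unitSphere d,
        Metric.ball u (min (ε / 4) (δ / 2)) ∩ unitSphere d ⊆
          (projWordComp A w '' (Metric.ball v₁ ε ∩ unitSphere d)) ∩ Metric.ball v₂ δ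

/-!
Projective transitivity makes every proper invariant subspace trivial, and the vectors with bounded
orbit form an invariant subspace; as the semigroup is unbounded, no nonzero vector has a bounded
orbit. By compactness of the unit sphere, words of bounded length then expand every vector by a
definite factor, so for each fixed `v ≠ 0` fast growth along arbitrarily late times is dense in `ω`.
Slow growth is dense in `(ω, v)`: a map of determinant at most one in absolute value has powers that
do not expand some unit vector, to which any open set of vectors can be steered at bounded cost.
Kuratowski–Ulam turns the latter into density in `ω` for generic `v`, and Baire combines the two.
A bounded semigroup has relatively compact closure, which in a topological group is a subgroup, so
non-compactness of the group closure does make the semigroup unbounded.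
-/

section TopologicalGroup

variable {G : Type*} [Group G] [TopologicalSpace G] [IsTopologicalGroup G] [T2Space G]

/- The compact semigroup `g S` contains an idempotent `g s`, which in a group can only be `1`. -/
lemma inv_mem_of_isCompact_submonoid {S : Submonoid G} (hS : IsCompact (S : Set G)) {g : G}
    (hg : g ∈ S) : g⁻¹ ∈ S := by
  obtain ⟨_, ⟨s, hs, rfl⟩, hidem⟩ := exists_idempotent_in_compact_subsemigroup
    (fun r : G => continuous_mul_const r) ((g * ·) '' S) ⟨g * 1, 1, S.one_mem, rfl⟩
    (hS.image (continuous_const_mul g)) (by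
      rintro _ ⟨s, hs, rfl⟩ _ ⟨t, ht, rfl⟩
      exact ⟨s * (g * t), S.mul_mem hs (S.mul_mem hg ht), by simp [mul_assoc]⟩)
  rwa [inv_eq_of_mul_eq_one_right (mul_eq_left.1 hidem)]

lemma isCompact_closure_subgroupClosure {s : Set G}
    (hs : IsCompact (closure (Submonoid.closure s : Set G))) :
    IsCompact (closure (Subgroup.closure s : Set G)) := by
  have hle : (Subgroup.closure s).toSubmonoid ≤ (Submonoid.closure s).topologicalClosure := by
    have hsub : s ⊆ (Submonoid.closure s).topologicalClosure :=
      Submonoid.subset_closure.trans subset_closure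
    rw [Subgroup.closure_toSubmonoid, Submonoid.closure_le]
    refine Set.union_subset hsub fun g hg => ?_
    exact inv_inv g ▸ inv_mem_of_isCompact_submonoid hs (hsub hg)
  exact hs.of_isClosed_subset isClosed_closure (closure_minimal hle isClosed_closure)

end TopologicalGroup

section Baire

/- The Kuratowski–Ulam theorem, in the form needed for countably many dense open sets. -/
lemma residual_forall_dense_section {X Y κ : Type*} [TopologicalSpace X] [TopologicalSpace Y]
    [SecondCountableTopology X] [Countable κ] {U : κ → Set (X × Y)} (ho : ∀ k, IsOpen (U k))
    (hd : ∀ k, Dense (U k)) : {y | ∀ k, Dense {x | (x, y) ∈ U k}} ∈ residual Y := by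
  have hbasis := TopologicalSpace.isBasis_countableBasis X
  have hmeets : ∀ k, ∀ B ∈ TopologicalSpace.countableBasis X,
      {y | ∃ x ∈ B, (x, y) ∈ U k} ∈ residual Y := by
    intro k B hB
    have hproj : {y | ∃ x ∈ B, (x, y) ∈ U k} = Prod.snd '' (B ×ˢ Set.univ ∩ U k) := by
      ext y
      simp
    refine residual_of_dense_open ?_ (dense_iff_inter_open.2 ?_)
    · rw [hproj]
      exact isOpenMap_snd _ (((hbasis.isOpen hB).prod isOpen_univ).inter (ho k))
    · rintro O hO ⟨y, hy⟩
      obtain ⟨x, hx⟩ := TopologicalSpace.nonempty_of_mem_countableBasis hB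
      obtain ⟨⟨a, b⟩, ⟨ha, hb⟩, hab⟩ := (hd k).inter_open_nonempty (B ×ˢ O)
        ((hbasis.isOpen hB).prod hO) ⟨(x, y), hx, hy⟩
      exact ⟨b, hb, a, ha, hab⟩
  have hall : ∀ᶠ y in residual Y, ∀ k, ∀ B ∈ TopologicalSpace.countableBasis X,
      ∃ x ∈ B, (x, y) ∈ U k :=
    eventually_countable_forall.2 fun k =>
      (eventually_countable_ball (TopologicalSpace.countable_countableBasis X)).2 (hmeets k)
  filter_upwards [hall] with y hy k
  exact hbasis.dense_iff.2 fun B hB _ => hy k B hB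

end Baire

section LinearMaps

variable {E : Type*} [NormedAddCommGroup E] [NormedSpace ℝ E]

lemma exists_one_lt_forall_mul_norm_le [FiniteDimensional ℝ E] [Nontrivial E] {f : E →ₗ[ℝ] E}
    (hf : ∀ v, ‖v‖ = 1 → 1 < ‖f v‖) : ∃ r : ℝ, 1 < r ∧ ∀ v, r * ‖v‖ ≤ ‖f v‖ := by
  obtain ⟨v₀, hv₀, hmin⟩ := (isCompact_sphere (0 : E) 1).exists_isMinOn
    (NormedSpace.sphere_nonempty.2 zero_le_one)
    f.continuous_of_finiteDimensional.norm.continuousOn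
  refine ⟨‖f v₀‖, hf v₀ (mem_sphere_zero_iff_norm.1 hv₀), fun v => ?_⟩
  rcases eq_or_ne v 0 with rfl | hv
  · simp
  have hle : ‖f v₀‖ ≤ ‖f (‖v‖⁻¹ • v)‖ := hmin (by simp [norm_smul, hv])
  rwa [map_smul, norm_smul, norm_inv, norm_norm, le_inv_mul_iff₀ (norm_pos_iff.2 hv),
    mul_comm] at hle

lemma one_lt_abs_det_of_forall_mul_norm_le [FiniteDimensional ℝ E] [Nontrivial E]
    {f : E →ₗ[ℝ] E} {r : ℝ} (hr : 1 < r) (hf : ∀ v, r * ‖v‖ ≤ ‖f v‖) :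
    1 < |LinearMap.det f| := by
  borelize E
  let μ : MeasureTheory.Measure E := MeasureTheory.Measure.addHaar
  have hr0 : 0 < r := one_pos.trans hr
  have hinj : Function.Injective f := (injective_iff_map_eq_zero f).2 fun v hv =>
    norm_le_zero_iff.1 (nonpos_of_mul_nonpos_right (by simpa [hv] using hf v) hr0)
  have hball : closedBall (0 : E) r ⊆ f '' closedBall 0 1 := fun y hy => by
    obtain ⟨x, rfl⟩ := LinearMap.injective_iff_surjective.1 hinj y
    refine ⟨x, ?_, rfl⟩
    rw [mem_closedBall_zero_iff] at hy ⊢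
    exact le_of_mul_le_mul_left (by simpa using (hf x).trans hy) hr0
  have hvol : ENNReal.ofReal (r ^ Module.finrank ℝ E) ≤ ENNReal.ofReal |LinearMap.det f| := by
    have hle := MeasureTheory.measure_mono (μ := μ) hball
    rw [MeasureTheory.Measure.addHaar_image_linearMap,
      MeasureTheory.Measure.addHaar_closedBall' μ _ hr0.le,
      MeasureTheory.Measure.addHaar_closedBall' μ _ zero_le_one, one_pow, ENNReal.ofReal_one,
      one_mul] at hle
    exact (ENNReal.mul_le_mul_iff_left (measure_closedBall_pos μ 0 one_pos).ne'
      MeasureTheory.measure_closedBall_lt_top.ne).1 hle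
  exact (one_lt_pow₀ hr Module.finrank_pos.ne').trans_le
    ((ENNReal.ofReal_le_ofReal_iff (abs_nonneg _)).1 hvol)

lemma exists_norm_eq_one_norm_map_le [FiniteDimensional ℝ E] [Nontrivial E] {f : E →ₗ[ℝ] E}
    (hf : |LinearMap.det f| ≤ 1) : ∃ v, ‖v‖ = 1 ∧ ‖f v‖ ≤ 1 := by
  by_contra! hexp
  obtain ⟨r, hr, hfr⟩ := exists_one_lt_forall_mul_norm_le hexp
  exact hf.not_gt (one_lt_abs_det_of_forall_mul_norm_le hr hfr)

lemma log_norm_map_sub_le {F : Type*} [NormedAddCommGroup F] [NormedSpace ℝ F] (f : E →L[ℝ] F)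
    {x : E} (hx : f x ≠ 0) :
    Real.log ‖f x‖ - Real.log ‖x‖ ≤ Real.log ‖f‖ := by
  have hx0 : ‖x‖ ≠ 0 := norm_ne_zero_iff.2 fun h => hx (by simp [h])
  have hf0 : ‖f‖ ≠ 0 := norm_ne_zero_iff.2 fun h => hx (by simp [h])
  rw [sub_le_iff_le_add, ← Real.log_mul hf0 hx0]
  exact Real.log_le_log (norm_pos_iff.2 hx) (f.le_opNorm x)

lemma exists_forall_abs_log_norm_map_sub_le {F : Type*} [NormedAddCommGroup F] [NormedSpace ℝ F]
    (e : E ≃L[ℝ] F) : ∃ B : ℝ, ∀ x, x ≠ 0 → |Real.log ‖e x‖ - Real.log ‖x‖| ≤ B := by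
  refine ⟨max (Real.log ‖(e : E →L[ℝ] F)‖) (Real.log ‖(e.symm : F →L[ℝ] E)‖), fun x hx => ?_⟩
  refine abs_sub_le_iff.2 ⟨le_max_of_le_left ?_, le_max_of_le_right ?_⟩
  · exact log_norm_map_sub_le (e : E →L[ℝ] F) (by simpa using hx)
  · simpa using log_norm_map_sub_le (e.symm : F →L[ℝ] E) (x := e x) (by simpa using hx)

end LinearMaps

section Words

/-- The product `A_{w_{p-1}} ⋯ A_{w_0}` along the word `w = (w₀, …, w_{p-1})`. The order is reversed
so that, for transformations, the first letter acts first. -/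
def wordProd {ι M : Type*} [Monoid M] (A : ι → M) (w : List ι) : M :=
  (w.reverse.map A).prod

variable {ι M : Type*} [Monoid M] (A : ι → M)

lemma wordProd_nil : wordProd A [] = 1 := rfl

lemma wordProd_singleton (i : ι) : wordProd A [i] = A i := by
  simp [wordProd]

lemma wordProd_append (u w : List ι) : wordProd A (u ++ w) = wordProd A w * wordProd A u := by
  simp [wordProd]

lemma wordProd_cons (i : ι) (w : List ι) : wordProd A (i :: w) = wordProd A w * A i := by
  simp [wordProd]

lemma map_wordProd {N : Type*} [Monoid N] (f : M →* N) (w : List ι) :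
    f (wordProd A w) = wordProd (fun i => f (A i)) w := by
  simp [wordProd, map_list_prod, Function.comp_def]

lemma range_wordProd : Set.range (wordProd A) = Submonoid.closure (Set.range A) := by
  rw [← FreeMonoid.mrange_lift, MonoidHom.coe_mrange]
  change Set.range ((fun w : List ι => (w.map A).prod) ∘ List.reverse) = _
  rw [List.reverse_surjective.range_comp]
  exact congrArg Set.range (funext fun w => (FreeMonoid.lift_apply A w).symm)

end Words

section Itineraries

variable {ι : Type*}

/-- The word `(ω₀, …, ω_{n-1})` read off a two-sided sequence. -/
def itinerary (ω : ℤ → ι) (n : ℕ) : List ι :=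
  (List.range n).map fun k : ℕ => ω k

lemma length_itinerary (ω : ℤ → ι) (n : ℕ) : (itinerary ω n).length = n := by
  simp [itinerary]

lemma itinerary_succ (ω : ℤ → ι) (n : ℕ) : itinerary ω (n + 1) = itinerary ω n ++ [ω n] := by
  simp [itinerary, List.range_succ]

lemma itinerary_congr {ω ω' : ℤ → ι} {m : ℕ} (h : ∀ i : ℤ, i < m → ω' i = ω i) :
    itinerary ω' m = itinerary ω m :=
  List.map_congr_left fun k hk => h k (by exact_mod_cast List.mem_range.1 hk)

lemma exists_itinerary_eq_append (ω : ℤ → ι) (m : ℕ) (w : List ι) :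
    ∃ ω' : ℤ → ι, (∀ i : ℤ, i < m → ω' i = ω i) ∧
      itinerary ω' (m + w.length) = itinerary ω m ++ w := by
  induction w using List.reverseRecOn with
  | nil => exact ⟨ω, fun _ _ => rfl, by simp⟩
  | append_singleton w i ih =>
    obtain ⟨ω', hpast, hword⟩ := ih
    have hupdate : ∀ j : ℤ, j < (m + w.length : ℕ) →
        Function.update ω' (m + w.length : ℕ) i j = ω' j :=
      fun j hj => Function.update_of_ne hj.ne _ _
    refine ⟨Function.update ω' (m + w.length : ℕ) i, fun j hj => ?_, ?_⟩
    · rw [hupdate j (by push_cast; lia), hpast j hj]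
    · rw [List.length_append, List.length_singleton, ← add_assoc, itinerary_succ,
        itinerary_congr hupdate, hword, Function.update_self, List.append_assoc]

lemma exists_cylinder_subset [TopologicalSpace ι] {O : Set (ℤ → ι)} (hO : IsOpen O) {ω : ℤ → ι}
    (hω : ω ∈ O) : ∃ m : ℕ, ∀ ω' : ℤ → ι, (∀ i : ℤ, i < m → ω' i = ω i) → ω' ∈ O := by
  obtain ⟨I, u, hu, hsub⟩ := isOpen_pi_iff.1 hO ω hω
  refine ⟨I.sup Int.natAbs + 1, fun ω' h => hsub fun i hi => ?_⟩
  have hle : i.natAbs ≤ I.sup Int.natAbs := Finset.le_sup (f := Int.natAbs) hi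
  rw [h i (by lia)]
  exact (hu i hi).2

lemma exists_itinerary_eq_append_mem [TopologicalSpace ι] {O : Set (ℤ → ι)} (hO : IsOpen O)
    {ω : ℤ → ι} (hω : ω ∈ O) :
    ∃ u : List ι, ∀ w : List ι, ∃ ω' ∈ O, itinerary ω' (u ++ w).length = u ++ w := by
  obtain ⟨m, hm⟩ := exists_cylinder_subset hO hω
  refine ⟨itinerary ω m, fun w => ?_⟩
  obtain ⟨ω', hpast, hword⟩ := exists_itinerary_eq_append ω m w
  exact ⟨ω', hm ω' hpast, by rwa [List.length_append, length_itinerary]⟩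

end Itineraries

section Transitivity

variable {ι E : Type*} [NormedAddCommGroup E] [NormedSpace ℝ E] {T : ι → E ≃L[ℝ] E}

/-- Projective transitivity of the semigroup generated by the `T i`: from every nonempty open set of
vectors, some word reaches the ray through any prescribed nonzero vector exactly. -/
def IsProjectivelyTransitive (T : ι → E ≃L[ℝ] E) : Prop :=
  ∀ U : Set E, IsOpen U → U.Nonempty → ∀ v ≠ 0, ∃ w, ∃ x ∈ U, ∃ c : ℝ, 0 < c ∧
    wordProd T w x = c • v

lemma wordProd_nil_apply (T : ι → E ≃L[ℝ] E) (x : E) : wordProd T [] x = x := rfl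

lemma wordProd_append_apply (T : ι → E ≃L[ℝ] E) (u w : List ι) (x : E) :
    wordProd T (u ++ w) x = wordProd T w (wordProd T u x) := by
  rw [wordProd_append]; rfl

lemma IsProjectivelyTransitive.eq_top_of_invariant [FiniteDimensional ℝ E]
    (hT : IsProjectivelyTransitive T) {W : Submodule ℝ E}
    (hW : ∀ w, ∀ x ∈ W, wordProd T w x ∈ W) (hbot : W ≠ ⊥) : W = ⊤ := by
  by_contra htop
  obtain ⟨v, hv, hv0⟩ := W.ne_bot_iff.1 hbot
  obtain ⟨z, -, hz⟩ := SetLike.exists_of_lt (lt_top_iff_ne_top.2 htop)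
  obtain ⟨w, x, hx, c, -, hxv⟩ := hT _ W.closed_of_finiteDimensional.isOpen_compl ⟨z, hz⟩ v hv0
  have hmap : W.map (wordProd T w).toLinearEquiv.toLinearMap = W :=
    Submodule.eq_of_le_of_finrank_eq (Submodule.map_le_iff_le_comap.2 (hW w))
      (LinearEquiv.finrank_map_eq _ W)
  obtain ⟨y, hy, hyx⟩ := hmap.ge (W.smul_mem c hv)
  exact hx ((wordProd T w).injective (hyx.trans hxv.symm) ▸ hy)

/-- The subspace of vectors with bounded orbit under the semigroup generated by the `T i`. It is
invariant, so under projective transitivity it is trivial or everything. -/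
def boundedOrbits (T : ι → E ≃L[ℝ] E) : Submodule ℝ E where
  carrier := {x | ∃ C, ∀ w, ‖wordProd T w x‖ ≤ C}
  zero_mem' := ⟨0, fun w => by simp⟩
  add_mem' := by
    rintro x y ⟨C, hC⟩ ⟨D, hD⟩
    exact ⟨C + D, fun w => by rw [map_add]; exact norm_add_le_of_le (hC w) (hD w)⟩
  smul_mem' := by
    rintro c x ⟨C, hC⟩
    exact ⟨‖c‖ * C, fun w => by
      rw [map_smul, norm_smul]; exact mul_le_mul_of_nonneg_left (hC w) (norm_nonneg c)⟩

lemma wordProd_mem_boundedOrbits (u : List ι) {x : E} (hx : x ∈ boundedOrbits T) :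
    wordProd T u x ∈ boundedOrbits T := by
  obtain ⟨C, hC⟩ := hx
  exact ⟨C, fun w => wordProd_append_apply T u w x ▸ hC (u ++ w)⟩

lemma IsProjectivelyTransitive.exists_lt_norm_wordProd [FiniteDimensional ℝ E]
    (hT : IsProjectivelyTransitive T)
    (hunb : ¬ Bornology.IsBounded (Set.range fun w => ((wordProd T w : E ≃L[ℝ] E) : E →L[ℝ] E)))
    {x : E} (hx : x ≠ 0) (B : ℝ) : ∃ w, B < ‖wordProd T w x‖ := by
  by_contra! hB
  have htop : boundedOrbits T = ⊤ :=
    hT.eq_top_of_invariant (fun u _ hy => wordProd_mem_boundedOrbits u hy)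
      (Submodule.ne_bot_iff _ |>.2 ⟨x, ⟨B, hB⟩, hx⟩)
  have : CompleteSpace E := FiniteDimensional.complete ℝ E
  obtain ⟨C, hC⟩ := banach_steinhaus (g := fun w => ((wordProd T w : E ≃L[ℝ] E) : E →L[ℝ] E))
    fun y => (htop.ge Submodule.mem_top : y ∈ boundedOrbits T)
  exact hunb (isBounded_iff_forall_norm_le.2 ⟨C, Set.forall_mem_range.2 hC⟩)

lemma exists_bounded_length_expansion [FiniteDimensional ℝ E] {r : ℝ}
    (hT : ∀ x : E, ‖x‖ = 1 → ∃ w, r < ‖wordProd T w x‖) :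
    ∃ L : ℕ, ∀ x ≠ 0, ∃ w, w.length ≤ L ∧ r * ‖x‖ < ‖wordProd T w x‖ := by
  let V : ℕ → Set E := fun L => ⋃ w ∈ {w : List ι | w.length ≤ L}, {x | r < ‖wordProd T w x‖}
  obtain ⟨L, hL⟩ := (isCompact_sphere (0 : E) 1).elim_directed_cover V
    (fun L => isOpen_biUnion fun w _ => isOpen_lt continuous_const (wordProd T w).continuous.norm)
    (fun x hx => by
      obtain ⟨w, hw⟩ := hT x (mem_sphere_zero_iff_norm.1 hx)
      exact Set.mem_iUnion.2 ⟨w.length, Set.mem_biUnion (show w.length ≤ w.length from le_rfl) hw⟩)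
    (Monotone.directed_le fun L L' hLL' =>
      Set.biUnion_subset_biUnion_left fun w hw => hw.trans hLL')
  refine ⟨L, fun x hx => ?_⟩
  obtain ⟨w, hwL, hw⟩ := Set.mem_iUnion₂.1
    (hL (show ‖x‖⁻¹ • x ∈ sphere (0 : E) 1 by simp [norm_smul, hx]))
  refine ⟨w, hwL, ?_⟩
  rwa [Set.mem_ofPred_eq, map_smul, norm_smul, norm_inv, norm_norm,
    lt_inv_mul_iff₀ (norm_pos_iff.2 hx), mul_comm] at hw

lemma exists_iterated_expansion {r : ℝ} (hr : 1 ≤ r) {L : ℕ}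
    (hL : ∀ x : E, x ≠ 0 → ∃ w, w.length ≤ L ∧ r * ‖x‖ < ‖wordProd T w x‖) {x : E} (hx : x ≠ 0)
    (k : ℕ) : ∃ w, k ≤ w.length ∧ w.length ≤ L * k ∧ r ^ k * ‖x‖ ≤ ‖wordProd T w x‖ := by
  induction k with
  | zero => exact ⟨[], by simp [wordProd_nil_apply]⟩
  | succ k ih =>
    obtain ⟨u, huk, huL, hu⟩ := ih
    have hy : wordProd T u x ≠ 0 := by simpa using hx
    obtain ⟨w, hwL, hw⟩ := hL _ hy
    have hw0 : w ≠ [] := by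
      rintro rfl
      exact (le_mul_of_one_le_left (norm_nonneg _) hr).not_gt (by rwa [wordProd_nil_apply] at hw)
    have hpos := List.length_pos_iff.2 hw0
    refine ⟨u ++ w, ?_, ?_, ?_⟩
    · rw [List.length_append]; lia
    · rw [List.length_append]; lia
    · calc r ^ (k + 1) * ‖x‖ = r * (r ^ k * ‖x‖) := by ring
        _ ≤ r * ‖wordProd T u x‖ := by gcongr
        _ ≤ ‖wordProd T (u ++ w) x‖ := by rw [wordProd_append_apply]; exact hw.le

lemma IsProjectivelyTransitive.exists_bounded_steering [FiniteDimensional ℝ E]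
    (hT : IsProjectivelyTransitive T) {U : Set E} (hU : IsOpen U) (hne : U.Nonempty) :
    ∃ M : ℝ, ∀ v, ‖v‖ = 1 → ∃ w, ∃ x ∈ U, ∃ c : ℝ, 0 < c ∧ c ≤ M ∧ wordProd T w x = c • v := by
  let V : ℝ → Set E := fun M =>
    ⋃ c ∈ Set.Ioc 0 M, ⋃ w : List ι, (c • ·) ⁻¹' ((wordProd T w : E ≃L[ℝ] E) '' U)
  obtain ⟨M, hM⟩ := (isCompact_sphere (0 : E) 1).elim_directed_cover V
    (fun M => isOpen_biUnion fun c _ => isOpen_iUnion fun w =>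
      ((wordProd T w).toHomeomorph.isOpenMap U hU).preimage (continuous_const_smul c))
    (fun v hv => by
      obtain ⟨w, x, hx, c, hc, hxv⟩ := hT U hU hne v (ne_zero_of_mem_unit_sphere ⟨v, hv⟩)
      exact Set.mem_iUnion.2 ⟨c, Set.mem_biUnion ⟨hc, le_rfl⟩ (Set.mem_iUnion.2 ⟨w, x, hx, hxv⟩)⟩)
    (Monotone.directed_le fun M M' hMM' =>
      Set.biUnion_subset_biUnion_left (Set.Ioc_subset_Ioc_right hMM'))
  refine ⟨M, fun v hv => ?_⟩
  obtain ⟨c, ⟨hc0, hcM⟩, hc⟩ := Set.mem_iUnion₂.1 (hM (mem_sphere_zero_iff_norm.2 hv))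
  obtain ⟨w, x, hx, hxv⟩ := Set.mem_iUnion.1 hc
  exact ⟨w, x, hx, c, hc0, hcM, hxv⟩

lemma exists_norm_eq_one_norm_wordProd_replicate_le [FiniteDimensional ℝ E] [Nontrivial E] {i : ι}
    (hdet : |LinearMap.det (T i : E →ₗ[ℝ] E)| ≤ 1) (n : ℕ) :
    ∃ v, ‖v‖ = 1 ∧ ‖wordProd T (List.replicate n i) v‖ ≤ 1 := by
  have hpow : ∀ v, wordProd T (List.replicate n i) v = ((T i : E →ₗ[ℝ] E) ^ n) v := by
    intro v
    induction n with
    | zero => rfl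
    | succ n ih => rw [List.replicate_succ', wordProd_append_apply, ih, pow_succ']; rfl
  simp only [hpow]
  refine exists_norm_eq_one_norm_map_le ?_
  rw [map_pow, abs_pow]
  exact pow_le_one₀ (abs_nonneg _) hdet

end Transitivity

section Growth

variable {ι E : Type*} [NormedAddCommGroup E] [NormedSpace ℝ E] (T : ι → E ≃L[ℝ] E)

/-- The pairs `(ω, v)` whose orbit is slower than `exp (χ n)` at some time `n ≥ N`. -/
def slowGrowth (χ : ℝ) (N : ℕ) : Set ((ℤ → ι) × E) :=
  {p | ∃ n ≥ N, ‖wordProd T (itinerary p.1 n) p.2‖ < Real.exp (χ * n)}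

/-- The pairs `(ω, v)` whose orbit is faster than `exp (χ n)` at some time `n ≥ N`. -/
def fastGrowth (χ : ℝ) (N : ℕ) : Set ((ℤ → ι) × E) :=
  {p | ∃ n ≥ N, Real.exp (χ * n) < ‖wordProd T (itinerary p.1 n) p.2‖}

section Topology

variable [TopologicalSpace ι]

lemma continuous_wordProd_itinerary [DiscreteTopology ι] (n : ℕ) :
    Continuous fun p : (ℤ → ι) × E => wordProd T (itinerary p.1 n) p.2 := by
  induction n with
  | zero => exact continuous_snd
  | succ n ih =>
    have hstep : Continuous fun q : ι × E => T q.1 q.2 :=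
      continuous_prod_of_discrete_left.2 fun i => (T i).continuous
    have hletter : Continuous fun p : (ℤ → ι) × E => p.1 n :=
      (continuous_apply (n : ℤ)).comp continuous_fst
    refine (hstep.comp (hletter.prodMk ih)).congr fun p => ?_
    rw [itinerary_succ, wordProd_append_apply, wordProd_singleton]
    rfl

lemma isOpen_slowGrowth [DiscreteTopology ι] (χ : ℝ) (N : ℕ) : IsOpen (slowGrowth T χ N) := by
  have hunion : slowGrowth T χ N =
      ⋃ n ≥ N, {p | ‖wordProd T (itinerary p.1 n) p.2‖ < Real.exp (χ * n)} := by
    ext p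
    simp [slowGrowth]
  rw [hunion]
  exact isOpen_biUnion fun n _ =>
    isOpen_lt (continuous_wordProd_itinerary T n).norm continuous_const

lemma isOpen_fastGrowth [DiscreteTopology ι] (χ : ℝ) (N : ℕ) : IsOpen (fastGrowth T χ N) := by
  have hunion : fastGrowth T χ N =
      ⋃ n ≥ N, {p | Real.exp (χ * n) < ‖wordProd T (itinerary p.1 n) p.2‖} := by
    ext p
    simp [fastGrowth]
  rw [hunion]
  exact isOpen_biUnion fun n _ =>
    isOpen_lt continuous_const (continuous_wordProd_itinerary T n).norm

variable {T}

lemma dense_fastGrowth_section {L : ℕ} {r χ : ℝ} (hχ : 0 ≤ χ) (hr : Real.exp (χ * L) < r)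
    (hL : ∀ x : E, x ≠ 0 → ∃ w, w.length ≤ L ∧ r * ‖x‖ < ‖wordProd T w x‖) {v : E} (hv : v ≠ 0)
    (N : ℕ) : Dense {ω | (ω, v) ∈ fastGrowth T χ N} := by
  refine dense_iff_inter_open.2 ?_
  rintro O hO ⟨ω, hω⟩
  obtain ⟨u, hu⟩ := exists_itinerary_eq_append_mem hO hω
  have hy : wordProd T u v ≠ 0 := by simpa using hv
  have hr1 : 1 < r / Real.exp (χ * L) := (one_lt_div (Real.exp_pos _)).2 hr
  obtain ⟨k, hk, hkN⟩ := (((tendsto_pow_atTop_atTop_of_one_lt hr1).eventually_gt_atTop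
    (Real.exp (χ * u.length) / ‖wordProd T u v‖)).and (eventually_ge_atTop N)).exists
  rw [div_pow, div_lt_div_iff₀ (norm_pos_iff.2 hy) (by positivity)] at hk
  have hr1' : 1 ≤ r := (Real.one_le_exp (by positivity)).trans hr.le
  obtain ⟨w, hkw, hwL, hw⟩ := exists_iterated_expansion hr1' hL hy k
  obtain ⟨ω', hω', hword⟩ := hu w
  refine ⟨ω', hω', (u ++ w).length, ?_, ?_⟩
  · rw [List.length_append]; lia
  have hlen : ((u ++ w).length : ℝ) ≤ u.length + k * L := by
    rw [List.length_append, mul_comm (k : ℝ)]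
    exact_mod_cast Nat.add_le_add_left hwL _
  calc Real.exp (χ * (u ++ w).length)
      ≤ Real.exp (χ * (u.length + k * L)) := by gcongr
    _ = Real.exp (χ * u.length) * Real.exp (χ * L) ^ k := by
      rw [← Real.exp_nat_mul, ← Real.exp_add]; ring_nf
    _ < r ^ k * ‖wordProd T u v‖ := hk
    _ ≤ ‖wordProd T w (wordProd T u v)‖ := hw
    _ = ‖wordProd T (itinerary ω' (u ++ w).length) v‖ := by rw [hword, wordProd_append_apply]

lemma IsProjectivelyTransitive.dense_slowGrowth [FiniteDimensional ℝ E] [Nontrivial E]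
    (hT : IsProjectivelyTransitive T) {i₀ : ι} (hdet : |LinearMap.det (T i₀ : E →ₗ[ℝ] E)| ≤ 1)
    {χ : ℝ} (hχ : 0 < χ) (N : ℕ) : Dense (slowGrowth T χ N) := by
  refine dense_iff_inter_open.2 ?_
  rintro O hO ⟨⟨ω, v₀⟩, hω⟩
  obtain ⟨O₁, O₂, hO₁, hO₂, hω₁, hv₀, hsub⟩ := isOpen_prod_iff.1 hO ω v₀ hω
  obtain ⟨u, hu⟩ := exists_itinerary_eq_append_mem hO₁ hω₁
  obtain ⟨M, hM⟩ := hT.exists_bounded_steering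
    ((wordProd T u).toHomeomorph.isOpenMap O₂ hO₂) ⟨_, v₀, hv₀, rfl⟩
  have hexp : Tendsto (fun n : ℕ => Real.exp (χ * n)) atTop atTop :=
    Real.tendsto_exp_atTop.comp (tendsto_natCast_atTop_atTop.const_mul_atTop hχ)
  obtain ⟨n, hMn, hnN⟩ := ((hexp.eventually_gt_atTop M).and (eventually_ge_atTop N)).exists
  obtain ⟨v, hv, hvn⟩ := exists_norm_eq_one_norm_wordProd_replicate_le hdet n
  obtain ⟨w, _, ⟨x, hx, rfl⟩, c, hc, hcM, hxv⟩ := hM v hv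
  obtain ⟨ω', hω', hword⟩ := hu (w ++ List.replicate n i₀)
  refine ⟨(ω', x), hsub ⟨hω', hx⟩, (u ++ (w ++ List.replicate n i₀)).length, ?_, ?_⟩
  · simp only [List.length_append, List.length_replicate]; lia
  have hreach : wordProd T (u ++ (w ++ List.replicate n i₀)) x =
      c • wordProd T (List.replicate n i₀) v := by
    rw [wordProd_append_apply, wordProd_append_apply, ← map_smul]
    exact congrArg _ hxv
  calc ‖wordProd T (itinerary ω' (u ++ (w ++ List.replicate n i₀)).length) x‖
      = c * ‖wordProd T (List.replicate n i₀) v‖ := by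
        rw [hword, hreach, norm_smul, Real.norm_of_nonneg hc.le]
    _ ≤ M := (mul_le_of_le_one_right hc.le hvn).trans hcM
    _ < Real.exp (χ * n) := hMn
    _ ≤ Real.exp (χ * (u ++ (w ++ List.replicate n i₀)).length) := by
      gcongr
      simp only [List.length_append, List.length_replicate]; lia

end Topology

end Growth

section Exponents

variable {ι E : Type*} [NormedAddCommGroup E] [NormedSpace ℝ E] {T : ι → E ≃L[ℝ] E}

/-- The finite-time exponent `(1/n) log ‖A⁽ⁿ⁾(ω) v‖`; it is `0` at `n = 0`. -/
def growthRate (T : ι → E ≃L[ℝ] E) (ω : ℤ → ι) (v : E) (n : ℕ) : ℝ :=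
  (n : ℝ)⁻¹ * Real.log ‖wordProd T (itinerary ω n) v‖

lemma abs_log_norm_wordProd_sub_le {B : ℝ}
    (hB : ∀ i, ∀ x ≠ 0, |Real.log ‖T i x‖ - Real.log ‖x‖| ≤ B) (w : List ι) {x : E}
    (hx : x ≠ 0) : |Real.log ‖wordProd T w x‖ - Real.log ‖x‖| ≤ w.length * B := by
  induction w generalizing x with
  | nil => simp [wordProd_nil_apply]
  | cons i w ih =>
    have hcons : wordProd T (i :: w) x = wordProd T w (T i x) := by rw [wordProd_cons]; rfl
    calc |Real.log ‖wordProd T (i :: w) x‖ - Real.log ‖x‖|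
        ≤ |Real.log ‖wordProd T w (T i x)‖ - Real.log ‖T i x‖| +
          |Real.log ‖T i x‖ - Real.log ‖x‖| := by rw [hcons]; exact abs_sub_le _ _ _
      _ ≤ w.length * B + B := add_le_add (ih (by simpa using hx)) (hB i x hx)
      _ = (i :: w).length * B := by rw [List.length_cons]; push_cast; ring

lemma exists_abs_growthRate_le [Finite ι] (ω : ℤ → ι) {v : E} (hv : v ≠ 0) :
    ∃ b : ℝ, ∀ n, |growthRate T ω v n| ≤ b := by
  choose B hB using fun i => exists_forall_abs_log_norm_map_sub_le (T i)
  obtain ⟨C, hC⟩ := (Set.finite_range B).bddAbove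
  have hT : ∀ i, ∀ x ≠ 0, |Real.log ‖T i x‖ - Real.log ‖x‖| ≤ C := fun i x hx =>
    (hB i x hx).trans (hC ⟨i, rfl⟩)
  have hC0 : 0 ≤ C := (abs_nonneg _).trans (hT (ω 0) v hv)
  refine ⟨C + |Real.log ‖v‖|, fun n => ?_⟩
  rcases n.eq_zero_or_pos with rfl | hn
  · simpa [growthRate] using by positivity
  have hn1 : (1 : ℝ) ≤ n := by exact_mod_cast hn
  rw [growthRate, abs_mul, abs_inv, Nat.abs_cast, inv_mul_le_iff₀ (by positivity)]
  calc |Real.log ‖wordProd T (itinerary ω n) v‖|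
      ≤ |Real.log ‖wordProd T (itinerary ω n) v‖ - Real.log ‖v‖| + |Real.log ‖v‖| := by
        simpa using abs_sub_le (Real.log ‖wordProd T (itinerary ω n) v‖) (Real.log ‖v‖) 0
    _ ≤ n * C + n * |Real.log ‖v‖| := by
        gcongr
        · simpa [length_itinerary] using abs_log_norm_wordProd_sub_le hT (itinerary ω n) hv
        · exact le_mul_of_one_le_left (abs_nonneg _) hn1
    _ = n * (C + |Real.log ‖v‖|) := by ring

lemma frequently_growthRate_le {ω : ℤ → ι} {v : E} (hv : v ≠ 0) {χ : ℝ}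
    (hslow : ∀ N, (ω, v) ∈ slowGrowth T χ N) : ∃ᶠ n in atTop, growthRate T ω v n ≤ χ := by
  refine frequently_atTop.2 fun N => ?_
  obtain ⟨n, hn, hlt⟩ := hslow (N + 1)
  have hn0 : (0 : ℝ) < n := by exact_mod_cast N.succ_pos.trans_le hn
  refine ⟨n, (Nat.le_succ N).trans hn, ?_⟩
  rw [growthRate, inv_mul_le_iff₀ hn0, mul_comm]
  exact ((Real.log_lt_iff_lt_exp (by simpa using hv)).2 hlt).le

lemma frequently_le_growthRate {ω : ℤ → ι} {v : E} {χ : ℝ}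
    (hfast : ∀ N, (ω, v) ∈ fastGrowth T χ N) : ∃ᶠ n in atTop, χ ≤ growthRate T ω v n := by
  refine frequently_atTop.2 fun N => ?_
  obtain ⟨n, hn, hlt⟩ := hfast (N + 1)
  have hn0 : (0 : ℝ) < n := by exact_mod_cast N.succ_pos.trans_le hn
  refine ⟨n, (Nat.le_succ N).trans hn, ?_⟩
  rw [growthRate, le_inv_mul_iff₀ hn0, mul_comm]
  exact ((Real.lt_log_iff_exp_lt ((Real.exp_pos _).trans hlt)).2 hlt).le

lemma liminf_growthRate_lt_limsup_growthRate [Finite ι] {ω : ℤ → ι} {v : E} (hv : v ≠ 0)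
    {χ₁ χ₂ : ℝ} (hχ : χ₁ < χ₂) (hslow : ∀ N, (ω, v) ∈ slowGrowth T χ₁ N)
    (hfast : ∀ N, (ω, v) ∈ fastGrowth T χ₂ N) :
    liminf (growthRate T ω v) atTop < limsup (growthRate T ω v) atTop := by
  obtain ⟨b, hb⟩ := exists_abs_growthRate_le (T := T) ω hv
  calc liminf (growthRate T ω v) atTop ≤ χ₁ :=
        liminf_le_of_frequently_le (frequently_growthRate_le hv hslow)
          (isBoundedUnder_of ⟨-b, fun n => (abs_le.1 (hb n)).1⟩)
    _ < χ₂ := hχ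
    _ ≤ limsup (growthRate T ω v) atTop :=
        le_limsup_of_frequently_le (frequently_le_growthRate hfast)
          (isBoundedUnder_of ⟨b, fun n => (abs_le.1 (hb n)).2⟩)

end Exponents

section Genericity

variable {ι E : Type*} [NormedAddCommGroup E] [NormedSpace ℝ E] {T : ι → E ≃L[ℝ] E}
  [FiniteDimensional ℝ E]

lemma IsProjectivelyTransitive.exists_dense_fastGrowth_section [TopologicalSpace ι]
    (hT : IsProjectivelyTransitive T)
    (hunb : ¬ Bornology.IsBounded (Set.range fun w => ((wordProd T w : E ≃L[ℝ] E) : E →L[ℝ] E))) :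
    ∃ χ > 0, ∀ v ≠ 0, ∀ N, Dense {ω | (ω, v) ∈ fastGrowth T χ N} := by
  obtain ⟨L, hL⟩ := exists_bounded_length_expansion (T := T) (r := 2) fun x hx =>
    hT.exists_lt_norm_wordProd hunb (norm_pos_iff.1 (hx ▸ one_pos)) 2
  obtain ⟨χ, hχ, hχL⟩ := exists_pos_mul_lt (Real.log_pos one_lt_two) (L : ℝ)
  have hexp : Real.exp (χ * L) < 2 := (Real.lt_log_iff_exp_lt two_pos).1 (mul_comm χ L ▸ hχL)
  exact ⟨χ, hχ, fun v hv N => dense_fastGrowth_section hχ.le hexp hL hv N⟩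

theorem lyapunov_irregular_residual_dense_general [Finite ι] [TopologicalSpace ι]
    [DiscreteTopology ι] (hT : IsProjectivelyTransitive T) {i₀ : ι}
    (hdet : |LinearMap.det (T i₀ : E →ₗ[ℝ] E)| ≤ 1)
    (hunb : ¬ Bornology.IsBounded (Set.range fun w => ((wordProd T w : E ≃L[ℝ] E) : E →L[ℝ] E))) :
    ∃ R ∈ residual (ℤ → ι), ∃ D : Set E, D ⊆ {v | v ≠ 0} ∧ Dense D ∧
      ∀ ω ∈ R, ∀ v ∈ D,
        liminf (growthRate T ω v) atTop < limsup (growthRate T ω v) atTop := by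
  have : Nontrivial E := by
    by_contra htriv
    have := not_nontrivial_iff_subsingleton.1 htriv
    exact hunb (Set.toFinite _).isBounded
  have : CompleteSpace E := FiniteDimensional.complete ℝ E
  obtain ⟨χ, hχ, hfast⟩ := hT.exists_dense_fastGrowth_section hunb
  have hslow : {v : E | (∀ N, Dense {ω | (ω, v) ∈ slowGrowth T (χ / 2) N}) ∧ v ≠ 0} ∈ residual E :=
    inter_mem
      (residual_forall_dense_section (isOpen_slowGrowth T (χ / 2))
        (hT.dense_slowGrowth hdet (half_pos hχ)))
      (residual_of_dense_open isOpen_compl_singleton (dense_compl_singleton 0))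
  obtain ⟨D, hDslow, hDc, hDd⟩ := (dense_of_mem_residual hslow).exists_countable_dense_subset
  have hgeneric : ∀ᶠ ω in residual (ℤ → ι), ∀ v ∈ D, ∀ N,
      (ω, v) ∈ slowGrowth T (χ / 2) N ∧ (ω, v) ∈ fastGrowth T χ N := by
    refine (eventually_countable_ball hDc).2 fun v hv => eventually_countable_forall.2 fun N => ?_
    have hsection : Continuous fun ω : ℤ → ι => (ω, v) := by fun_prop
    exact inter_mem
      (residual_of_dense_open ((isOpen_slowGrowth T _ N).preimage hsection) ((hDslow hv).1 N))
      (residual_of_dense_open ((isOpen_fastGrowth T _ N).preimage hsection)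
        (hfast v (hDslow hv).2 N))
  exact ⟨_, hgeneric, D, fun v hv => (hDslow hv).2, hDd, fun ω hω v hv =>
    liminf_growthRate_lt_limsup_growthRate (hDslow hv).2 (half_lt_self hχ)
      (fun N => (hω v hv N).1) (fun N => (hω v hv N).2)⟩

end Genericity

section SpecialLinear

variable {d κ : ℕ}

/-- The action of `SL(d, ℝ)` on Euclidean space by continuous linear automorphisms; on vectors it
is `mvec`. -/
def slAction : Matrix.SpecialLinearGroup (Fin d) ℝ →*
    (EuclideanSpace ℝ (Fin d) ≃L[ℝ] EuclideanSpace ℝ (Fin d)) :=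
  (ContinuousLinearEquiv.unitsEquiv ℝ (EuclideanSpace ℝ (Fin d))).toMonoidHom.comp
    ((Units.map (Matrix.toEuclideanCLM (n := Fin d) (𝕜 := ℝ) : _ →* _)).comp
      Matrix.SpecialLinearGroup.toGL)

lemma slAction_apply (g : Matrix.SpecialLinearGroup (Fin d) ℝ) (v : EuclideanSpace ℝ (Fin d)) :
    slAction g v = mvec (g : Matrix (Fin d) (Fin d) ℝ) v := rfl

lemma det_slAction (g : Matrix.SpecialLinearGroup (Fin d) ℝ) :
    LinearMap.det (slAction g : EuclideanSpace ℝ (Fin d) →ₗ[ℝ] EuclideanSpace ℝ (Fin d)) = 1 :=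
  (LinearMap.det_toLpLin 2 (g : Matrix (Fin d) (Fin d) ℝ)).trans g.det_coe

lemma isClosedEmbedding_slAction :
    IsClosedEmbedding fun g : Matrix.SpecialLinearGroup (Fin d) ℝ =>
      ((slAction g : EuclideanSpace ℝ (Fin d) ≃L[ℝ] EuclideanSpace ℝ (Fin d)) :
        EuclideanSpace ℝ (Fin d) →L[ℝ] EuclideanSpace ℝ (Fin d)) :=
  (Matrix.toEuclideanCLM (n := Fin d) (𝕜 := ℝ)).toAlgEquiv.toLinearEquiv.toContinuousLinearEquiv
    |>.toHomeomorph.isClosedEmbedding.comp Matrix.SpecialLinearGroup.isClosedEmbedding_val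

lemma isCompact_closure_subgroupClosure_of_isBounded_wordProd
    {A : Fin κ → Matrix.SpecialLinearGroup (Fin d) ℝ}
    (hA : Bornology.IsBounded (Set.range fun w =>
      ((wordProd (fun i => slAction (A i)) w : EuclideanSpace ℝ (Fin d) ≃L[ℝ] _) :
        EuclideanSpace ℝ (Fin d) →L[ℝ] EuclideanSpace ℝ (Fin d)))) :
    IsCompact (closure
      (((↑) : Matrix.SpecialLinearGroup (Fin d) ℝ → Matrix (Fin d) (Fin d) ℝ) ''
        (Subgroup.closure (Set.range A) : Set (Matrix.SpecialLinearGroup (Fin d) ℝ)))) := by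
  have hsemigroup : IsCompact (closure (Submonoid.closure (Set.range A) :
      Set (Matrix.SpecialLinearGroup (Fin d) ℝ))) := by
    refine (isClosedEmbedding_slAction.isCompact_preimage hA.isCompact_closure).closure_of_subset ?_
    rw [← range_wordProd]
    rintro _ ⟨w, rfl⟩
    exact subset_closure ⟨w, by simp only [map_wordProd]⟩
  exact ((isCompact_closure_subgroupClosure hsemigroup).image
    Matrix.SpecialLinearGroup.isClosedEmbedding_val.continuous).closure_of_subset
      (Set.image_mono subset_closure)

lemma growthRate_slAction (A : Fin κ → Matrix.SpecialLinearGroup (Fin d) ℝ) (ω : ℤ → Fin κ)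
    (v : EuclideanSpace ℝ (Fin d)) :
    growthRate (fun i => slAction (A i)) ω v = fun n : ℕ =>
      (n : ℝ)⁻¹ * Real.log ‖mvec (cocycleProd A ω n : Matrix (Fin d) (Fin d) ℝ) v‖ := by
  have hcocycle : ∀ n, cocycleProd A ω n = wordProd A (itinerary ω n) := by
    intro n
    induction n with
    | zero => rfl
    | succ n ih =>
      rw [cocycleProd, ih, itinerary_succ, wordProd_append, wordProd_singleton]
  funext n
  rw [growthRate, ← map_wordProd, slAction_apply, hcocycle]

end SpecialLinear

section Accessibility

variable {d κ : ℕ} {A : Fin κ → Matrix.SpecialLinearGroup (Fin d) ℝ}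

lemma projMap_smul {c : ℝ} (hc : 0 < c) (B : Matrix (Fin d) (Fin d) ℝ)
    (v : EuclideanSpace ℝ (Fin d)) : projMap B (c • v) = projMap B v := by
  have hsmul : mvec B (c • v) = c • mvec B v := map_smul _ _ _
  rw [projMap, projMap, hsmul, norm_smul, Real.norm_of_nonneg hc.le, mul_inv_rev, smul_smul,
    inv_mul_cancel_right₀ hc.ne']

lemma mvec_ne_zero (g : Matrix.SpecialLinearGroup (Fin d) ℝ) {v : EuclideanSpace ℝ (Fin d)}
    (hv : v ≠ 0) : mvec (g : Matrix (Fin d) (Fin d) ℝ) v ≠ 0 :=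
  (slAction g).map_eq_zero_iff.not.2 hv

lemma projMap_mul (B : Matrix (Fin d) (Fin d) ℝ) (g : Matrix.SpecialLinearGroup (Fin d) ℝ)
    {v : EuclideanSpace ℝ (Fin d)} (hv : v ≠ 0) :
    projMap (B * (g : Matrix (Fin d) (Fin d) ℝ)) v =
      projMap B (projMap (g : Matrix (Fin d) (Fin d) ℝ) v) := by
  have hmul : mvec (B * (g : Matrix (Fin d) (Fin d) ℝ)) v =
      mvec B (mvec (g : Matrix (Fin d) (Fin d) ℝ) v) := by
    simp [mvec, Matrix.toLpLin_apply, Matrix.mulVec_mulVec]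
  rw [projMap, hmul]
  exact (projMap_smul (inv_pos.2 (norm_pos_iff.2 (mvec_ne_zero g hv))) B _).symm

lemma projWordComp_eq_projMap_wordProd (w : List (Fin κ)) {x : EuclideanSpace ℝ (Fin d)}
    (hx : x ∈ unitSphere d) :
    projWordComp A w x = projMap (wordProd A w).1 x := by
  have hx1 : ‖x‖ = 1 := mem_sphere_zero_iff_norm.1 hx
  have hx0 : x ≠ 0 := norm_pos_iff.1 (hx1 ▸ one_pos)
  induction w using List.reverseRecOn with
  | nil => simp [projWordComp, projMap, wordProd_nil, mvec, hx1]
  | append_singleton w i ih =>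
    rw [wordProd_append, wordProd_singleton, Matrix.SpecialLinearGroup.coe_mul, projMap_mul _ _ hx0,
      ← ih, projWordComp, projWordComp, List.foldl_append]
    rfl

lemma continuousOn_projMap (g : Matrix.SpecialLinearGroup (Fin d) ℝ) :
    ContinuousOn (projMap (g : Matrix (Fin d) (Fin d) ℝ)) (unitSphere d) := by
  have hcont : Continuous (mvec (g : Matrix (Fin d) (Fin d) ℝ)) := (slAction g).continuous
  exact (hcont.norm.continuousOn.inv₀ fun x hx => norm_ne_zero_iff.2
    (mvec_ne_zero g (ne_zero_of_mem_unit_sphere ⟨x, hx⟩))).smul hcont.continuousOn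

/- The length bound `K` does not depend on the target radius `δ`, so only finitely many words are
involved and letting `δ → 0` yields exact attainment by compactness. -/
lemma StronglyProjectivelyAccessible.exists_projMap_eq (hA : StronglyProjectivelyAccessible A)
    {ε : ℝ} (hε : 0 < ε) {v₁ v₂ : EuclideanSpace ℝ (Fin d)} (hv₁ : v₁ ∈ unitSphere d)
    (hv₂ : v₂ ∈ unitSphere d) :
    ∃ w, ∃ x ∈ closedBall v₁ ε, x ≠ 0 ∧
      projMap (wordProd A w).1 x = v₂ := by
  obtain ⟨K, hK⟩ := hA ε hε
  let reach : Set (EuclideanSpace ℝ (Fin d)) := ⋃ w ∈ {w : List (Fin κ) | w.length ≤ K},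
    projMap (wordProd A w).1 '' (closedBall v₁ ε ∩ unitSphere d)
  have hclosed : IsClosed reach :=
    ((List.finite_length_le (Fin κ) K).isCompact_biUnion fun w _ =>
      ((isCompact_closedBall v₁ ε).inter_right isClosed_sphere).image_of_continuousOn
        ((continuousOn_projMap _).mono Set.inter_subset_right)).isClosed
  have hmem : v₂ ∈ reach := hclosed.closure_subset <| Metric.mem_closure_iff.2 fun δ hδ => by
    obtain ⟨p, hp, w, hw, u, hu, hsub⟩ :=
      hK v₁ hv₁ v₂ hv₂ (min ε δ) (by positivity) (min_le_left ..)
    obtain ⟨⟨x, ⟨hxball, hx⟩, rfl⟩, hdist⟩ := hsub ⟨mem_ball_self (by positivity), hu⟩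
    refine ⟨_, Set.mem_biUnion (show w.length ≤ K from hw.trans_le hp)
      ⟨x, ⟨ball_subset_closedBall hxball, hx⟩, rfl⟩, ?_⟩
    rw [← projWordComp_eq_projMap_wordProd w hx, dist_comm]
    exact (mem_ball.1 hdist).trans_le (min_le_right _ _)
  obtain ⟨w, -, x, ⟨hxball, hx⟩, hxv⟩ := Set.mem_iUnion₂.1 hmem
  exact ⟨w, x, hxball, ne_zero_of_mem_unit_sphere ⟨x, hx⟩, hxv⟩

lemma StronglyProjectivelyAccessible.isProjectivelyTransitive [NeZero d]
    (hA : StronglyProjectivelyAccessible A) :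
    IsProjectivelyTransitive fun i => slAction (A i) := by
  intro U hU hne v hv
  obtain ⟨y, hyU, hy⟩ :=
    (dense_compl_singleton (0 : EuclideanSpace ℝ (Fin d))).inter_open_nonempty U hU hne
  have hy0 : 0 < ‖y‖ := norm_pos_iff.2 hy
  have hunit : ∀ z : EuclideanSpace ℝ (Fin d), z ≠ 0 → ‖z‖⁻¹ • z ∈ unitSphere d := fun z hz => by
    simp [unitSphere, norm_smul, hz]
  obtain ⟨ε, hε, hball⟩ := Metric.nhds_basis_closedBall.mem_iff.1
    ((hU.preimage (continuous_const_smul ‖y‖)).mem_nhds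
      (show ‖y‖⁻¹ • y ∈ _ by simpa [smul_smul, hy0.ne'] using hyU))
  obtain ⟨w, x, hx, hx0, hxv⟩ := hA.exists_projMap_eq hε (hunit y hy) (hunit v hv)
  have hwx : 0 < ‖mvec (wordProd A w).1 x‖ :=
    norm_pos_iff.2 (mvec_ne_zero _ hx0)
  refine ⟨w, ‖y‖ • x, hball hx, ‖y‖ * ‖mvec (wordProd A w).1 x‖ * ‖v‖⁻¹, by positivity, ?_⟩
  rw [← map_wordProd, map_smul, slAction_apply, mul_assoc, mul_smul, mul_smul, ← hxv, projMap,
    smul_inv_smul₀ hwx.ne']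

end Accessibility

/-- **Lyapunov non-typical behaviour: residual set of sequences and dense set of directions.**
If the subgroup of `SL(d,ℝ)` generated by `A₁, …, A_κ` has non-compact closure and the family
is strongly projectively accessible, then there exist a residual subset `𝓡` of the shift
space `Σ_κ = {1,…,κ}^ℤ` and a dense subset `𝓓` of `ℝ^d ∖ {0}` such that for every `ω ∈ 𝓡`
and every `v ∈ 𝓓` the exponential growth rate of `‖A⁽ⁿ⁾(ω) v‖` does not exist. -/
theorem lyapunov_irregular_residual_dense (d κ : ℕ) (hd : 2 ≤ d) (hκ : 1 ≤ κ)
    (A : Fin κ → Matrix.SpecialLinearGroup (Fin d) ℝ)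
    (hnc : ¬ IsCompact (closure
      (((↑) : Matrix.SpecialLinearGroup (Fin d) ℝ → Matrix (Fin d) (Fin d) ℝ) ''
        ((Subgroup.closure (Set.range A) : Subgroup (Matrix.SpecialLinearGroup (Fin d) ℝ)) :
          Set (Matrix.SpecialLinearGroup (Fin d) ℝ)))))
    (hacc : StronglyProjectivelyAccessible A) :
    ∃ R : Set (ℤ → Fin κ), R ∈ residual (ℤ → Fin κ) ∧
      ∃ D : Set (EuclideanSpace ℝ (Fin d)),
        D ⊆ {v : EuclideanSpace ℝ (Fin d) | v ≠ 0} ∧ Dense D ∧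
        ∀ ω ∈ R, ∀ v ∈ D,
          liminf (fun n : ℕ =>
              (n : ℝ)⁻¹ * Real.log ‖mvec (cocycleProd A ω n : Matrix (Fin d) (Fin d) ℝ) v‖)
            atTop <
          limsup (fun n : ℕ =>
              (n : ℝ)⁻¹ * Real.log ‖mvec (cocycleProd A ω n : Matrix (Fin d) (Fin d) ℝ) v‖)
            atTop := by
  have : NeZero d := ⟨by lia⟩
  have hunb := mt isCompact_closure_subgroupClosure_of_isBounded_wordProd hnc
  simpa only [growthRate_slAction] using lyapunov_irregular_residual_dense_general
    hacc.isProjectivelyTransitive (i₀ := ⟨0, hκ⟩) (by simp [det_slAction]) hunb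

end
end

section
/- Let (X,d) be a compact metric space, κ ≥ 1, and let f₁,…,f_κ : X → X be bijections such that every f_i and every f_i⁻¹ is Lipschitz continuous. Let ψ : X → ℝ be continuous. Assume: (a) the semigroup action generated by f₁,…,f_κ has frequent hitting times; (b) there exists 1 ≤ i ≤ κ such that ψ is not a coboundary with respect to f_i. Let Σ̂_κ := {1,…,κ}^ℤ with the product topology and let F : Σ̂_κ × X → Σ̂_κ × X be the skew product F(ω,x) = (σ(ω), f_{ω₀}(x)), where σ is the left shift. Then the set I_F(φ_ψ) = {(ω,x) ∈ Σ̂_κ × X : the sequence ((1/n) ∑_{j=0}^{n−1} ψ(f_ω^j(x)))_{n≥1} does not converge} is a residual subset of Σ̂_κ × X. -/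
open Filter Topology Metric MeasureTheory

noncomputable section

/-- Composition `f_{ω_{p-1}} ∘ ⋯ ∘ f_{ω₀}` along a finite word `w = (ω₀, …, ω_{p-1})`. -/
def wordComp {X : Type*} {κ : ℕ} (f : Fin κ → X → X) (w : List (Fin κ)) (x : X) : X :=
  w.foldl (fun y i => f i y) x

/-- Composition `f_ω^n = f_{ω_{n-1}} ∘ ⋯ ∘ f_{ω₀}` along an infinite word `ω ∈ {1,…,κ}^ℕ`. -/
def seqComp {X : Type*} {κ : ℕ} (f : Fin κ → X → X) (ω : ℕ → Fin κ) : ℕ → X → X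
  | 0 => id
  | n + 1 => f (ω n) ∘ seqComp f ω n

/-- The semigroup action generated by `f₁, …, f_κ` has *frequent hitting times*:
for every `ε > 0` there is `K(ε)` such that for all `x₁, x₂ ∈ X` and every radius
`0 < r ≤ ε/2` there are `p ≤ K(ε)`, a word `w` of length `p` and a point `z` with
`B(z, r/2) ⊆ f_w^p(B(x₁,ε)) ∩ B(x₂,r)`. -/
def FrequentHittingTimes {X : Type*} [MetricSpace X] {κ : ℕ} (f : Fin κ → X → X) : Prop :=
  ∀ ε : ℝ, 0 < ε → ∃ K : ℕ, ∀ x₁ x₂ : X, ∀ r : ℝ, 0 < r → r ≤ ε / 2 →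
    ∃ p ≤ K, ∃ w : List (Fin κ), w.length = p ∧ ∃ z : X,
      Metric.ball z (r / 2) ⊆ wordComp f w '' Metric.ball x₁ ε ∩ Metric.ball x₂ r

/-- `ψ` is not a coboundary with respect to `f`: there are two `f`-invariant Borel
probability measures giving `ψ` different space averages. -/
def NotCoboundary {X : Type*} [MeasurableSpace X] (f : X → X) (ψ : X → ℝ) : Prop :=
  ∃ μ₁ μ₂ : Measure X, IsProbabilityMeasure μ₁ ∧ IsProbabilityMeasure μ₂ ∧
    μ₁.map f = μ₁ ∧ μ₂.map f = μ₂ ∧ ∫ x, ψ x ∂μ₁ < ∫ x, ψ x ∂μ₂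


/-- The left shift on the two-sided sequence space `Σ̂_κ = {1,…,κ}^ℤ`. -/
def shiftZ {κ : ℕ} (ω : ℤ → Fin κ) : ℤ → Fin κ := fun n => ω (n + 1)

/-- The skew product `F(ω,x) = (σ(ω), f_{ω₀}(x))` over the two-sided shift. -/
def skewProd {X : Type*} {κ : ℕ} (f : Fin κ → X → X) :
    ((ℤ → Fin κ) × X) → ((ℤ → Fin κ) × X) :=
  fun p => (shiftZ p.1, f (p.1 0) p.2)

/-!
A point of `Σ̂_κ × X` is irregular if its Birkhoff averages are infinitely often above some `c₂`
and infinitely often below some `c₁ < c₂`. Each condition defines a `Gδ` set, so only density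
is at stake. Invariance of `μ` forces some orbit segment of `f_i` of any prescribed length to have
average at least `∫ ψ dμ`. Starting from an open set `U` of the skew product, frequent hitting times
lead, in a time bounded independently of the target, to an open set of starting points of such
segments; from there on the letter `i` is repeated. As that bounded transient contributes nothing
to long averages, some points of `U` have averages close to `∫ ψ dμ` at arbitrarily large times.
-/

theorem not_exists_tendsto_of_frequently_lt {ι α : Type*} [TopologicalSpace α] [Preorder α]
    [OrderClosedTopology α] {l : Filter ι} {u : ι → α} {a b : α} (hab : a < b)
    (ha : ∃ᶠ n in l, u n < a) (hb : ∃ᶠ n in l, b < u n) : ¬ ∃ x, Tendsto u l (𝓝 x) := by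
  rintro ⟨x, hx⟩
  have hxa : x ≤ a := le_of_tendsto_of_frequently hx (ha.mono fun _ => le_of_lt)
  have hbx : b ≤ x := ge_of_tendsto_of_frequently hx (hb.mono fun _ => le_of_lt)
  exact (hbx.trans hxa).not_gt hab

theorem dist_birkhoffAverage_iterate_le {α E : Type*} [NormedAddCommGroup E] [NormedSpace ℝ E]
    (T : α → α) {φ : α → E} {D : ℝ} (hD : ∀ x y, dist (φ x) (φ y) ≤ D) (n q : ℕ) (x : α) :
    dist (birkhoffAverage ℝ T φ n x) (birkhoffAverage ℝ T φ n (T^[q] x)) ≤ q * (D / n) := by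
  have hstep : ∀ k < q, dist (birkhoffAverage ℝ T φ n (T^[k] x))
      (birkhoffAverage ℝ T φ n (T^[k + 1] x)) ≤ D / n := fun k _ => by
    rw [Function.iterate_succ_apply', dist_comm, dist_birkhoffAverage_apply_birkhoffAverage]
    gcongr
    exact hD _ _
  simpa using dist_le_range_sum_of_dist_le q fun {k} hk => hstep k hk

theorem continuous_birkhoffAverage {R α M : Type*} [DivisionSemiring R] [AddCommMonoid M]
    [Module R M] [TopologicalSpace α] [TopologicalSpace M] [ContinuousAdd M]
    [ContinuousConstSMul R M] {T : α → α} (hT : Continuous T) {φ : α → M} (hφ : Continuous φ)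
    (n : ℕ) : Continuous (birkhoffAverage R T φ n) :=
  (continuous_finsetSum _ fun k _ => hφ.comp (hT.iterate k)).const_smul _

section Integral

variable {α E : Type*} [MeasurableSpace α] {μ : Measure α} [NormedAddCommGroup E] [NormedSpace ℝ E]
  {T : α → α} {φ : α → E}

theorem integrable_birkhoffAverage (hT : MeasurePreserving T μ μ) (hφ : Integrable φ μ) (n : ℕ) :
    Integrable (birkhoffAverage ℝ T φ n) μ :=
  (integrable_finsetSum _ fun k _ => (hT.iterate k).integrable_comp_of_integrable hφ).smul _

theorem integral_birkhoffAverage (hT : MeasurePreserving T μ μ) (hφ : Integrable φ μ) {n : ℕ}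
    (hn : n ≠ 0) : ∫ x, birkhoffAverage ℝ T φ n x ∂μ = ∫ x, φ x ∂μ := by
  have hiter : ∀ k, ∫ x, φ (T^[k] x) ∂μ = ∫ x, φ x ∂μ := fun k => by
    have hk := hT.iterate k
    rw [← integral_map hk.aemeasurable (hk.map_eq.symm ▸ hφ.aestronglyMeasurable), hk.map_eq]
  have hintegrable : ∀ k, Integrable (fun x => φ (T^[k] x)) μ :=
    fun k => (hT.iterate k).integrable_comp_of_integrable hφ
  simp only [birkhoffAverage, birkhoffSum]
  rw [integral_smul, integral_finsetSum _ fun k _ => hintegrable k]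
  simp [hiter, ← Nat.cast_smul_eq_nsmul ℝ, hn]

theorem exists_integral_le_birkhoffAverage [IsProbabilityMeasure μ] (hT : MeasurePreserving T μ μ)
    {φ : α → ℝ} (hφ : Integrable φ μ) {n : ℕ} (hn : n ≠ 0) :
    ∃ x, ∫ y, φ y ∂μ ≤ birkhoffAverage ℝ T φ n x :=
  integral_birkhoffAverage hT hφ hn ▸ exists_integral_le (integrable_birkhoffAverage hT hφ n)

end Integral

/-- The irregular set `I_T(φ)`: the points whose Birkhoff averages of `φ` along `T` diverge. -/
def irregularSet {α : Type*} (T : α → α) (φ : α → ℝ) : Set α :=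
  {x | ¬ ∃ l, Tendsto (fun n => birkhoffAverage ℝ T φ n x) atTop (𝓝 l)}

section Residual

open scoped BoundedContinuousFunction

variable {Y : Type*} [TopologicalSpace Y] {T : Y → Y} {φ : Y →ᵇ ℝ} {b c : ℝ}

theorem dense_exists_lt_birkhoffAverage (hcb : c < b)
    (h : ∀ U : Set Y, IsOpen U → U.Nonempty →
      ∃ M : ℕ, ∀ n ≠ 0, ∃ q ≤ M, ∃ x ∈ U, b < birkhoffAverage ℝ T φ n (T^[q] x)) (N : ℕ) :
    Dense {x | ∃ n ≥ N, c < birkhoffAverage ℝ T φ n x} := by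
  refine dense_iff_inter_open.2 fun U hU hne => ?_
  obtain ⟨M, hM⟩ := h U hU hne
  have htransient : Tendsto (fun n : ℕ => M * (2 * ‖φ‖ / n)) atTop (𝓝 0) := by
    simpa using (tendsto_const_div_atTop_nhds_zero_nat (2 * ‖φ‖)).const_mul (M : ℝ)
  obtain ⟨n, hn, hnN, hn0⟩ := ((htransient.eventually_lt_const (sub_pos.2 hcb)).and
    ((eventually_ge_atTop N).and (eventually_ne_atTop 0))).exists
  obtain ⟨q, hqM, x, hxU, hx⟩ := hM n hn0
  refine ⟨x, hxU, n, hnN, ?_⟩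
  have hdist : |birkhoffAverage ℝ T φ n x - birkhoffAverage ℝ T φ n (T^[q] x)| < b - c :=
    calc |birkhoffAverage ℝ T φ n x - birkhoffAverage ℝ T φ n (T^[q] x)|
        ≤ q * (2 * ‖φ‖ / n) := dist_birkhoffAverage_iterate_le T φ.dist_le_two_norm n q x
      _ ≤ M * (2 * ‖φ‖ / n) := by gcongr
      _ < b - c := hn
  linarith [(abs_lt.1 hdist).1]

theorem frequently_lt_birkhoffAverage_mem_residual (hT : Continuous T) (hcb : c < b)
    (h : ∀ U : Set Y, IsOpen U → U.Nonempty →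
      ∃ M : ℕ, ∀ n ≠ 0, ∃ q ≤ M, ∃ x ∈ U, b < birkhoffAverage ℝ T φ n (T^[q] x)) :
    {x | ∃ᶠ n in atTop, c < birkhoffAverage ℝ T φ n x} ∈ residual Y := by
  simp only [frequently_atTop, Set.ofPred_forall]
  refine countable_iInter_mem.2 fun N =>
    residual_of_dense_open ?_ (dense_exists_lt_birkhoffAverage hcb h N)
  simp only [Set.ofPred_exists, Set.ofPred_and]
  exact isOpen_iUnion fun n => isOpen_const.inter
    (isOpen_lt continuous_const (continuous_birkhoffAverage hT φ.continuous n))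

end Residual

section InsertWord

variable {α : Type*}

/-- The two-sided sequence `…ω₋₂ω₋₁.w₀w₁⋯w_{p-1}aaa…` with the past of `ω`, followed from
coordinate `0` on by the word `w` and then by the letter `a` forever. -/
def insertWord (ω : ℤ → α) (w : List α) (a : α) : ℤ → α :=
  fun k => if k < 0 then ω k else w.getD k.toNat a

theorem insertWord_natCast_of_lt (ω : ℤ → α) {w : List α} (a : α) {n : ℕ} (hn : n < w.length) :
    insertWord ω w a n = w[n] := by
  simp [insertWord, hn]

theorem insertWord_length_add (ω : ℤ → α) (w : List α) (a : α) (n : ℕ) :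
    insertWord ω w a (w.length + n) = a := by
  rw [insertWord, if_neg (by omega), ← Nat.cast_add, Int.toNat_natCast,
    List.getD_eq_default _ _ (Nat.le_add_right _ _)]

theorem exists_forall_insertWord_append_mem [TopologicalSpace α] {A : Set (ℤ → α)} (hA : IsOpen A)
    {ω : ℤ → α} (hω : ω ∈ A) : ∃ v : List α, ∀ w a, insertWord ω (v ++ w) a ∈ A := by
  obtain ⟨I, u, hu, hIA⟩ := isOpen_pi_iff.1 hA ω hω
  obtain ⟨b, hb⟩ := I.bddAbove
  obtain ⟨m, hbm⟩ : ∃ m : ℕ, b < m := ⟨b.toNat + 1, by omega⟩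
  refine ⟨List.ofFn fun k : Fin m => ω k, fun w a => hIA fun k hk => ?_⟩
  have hagree : insertWord ω (List.ofFn (fun k : Fin m => ω k) ++ w) a k = ω k := by
    rcases lt_or_ge k 0 with hneg | hpos
    · exact if_pos hneg
    · lift k to ℕ using hpos
      have hkm : k < m := by exact_mod_cast (hb hk).trans_lt hbm
      have hlt : k < (List.ofFn (fun k : Fin m => ω k) ++ w).length := by
        simpa using Nat.lt_add_right w.length hkm
      rw [insertWord_natCast_of_lt ω a hlt, List.getElem_append_left (by simpa),
        List.getElem_ofFn]
  exact hagree ▸ (hu k hk).2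

end InsertWord

section SkewProduct

variable {X : Type*} {κ : ℕ} (f : Fin κ → X → X)

theorem fst_iterate_skewProd (n : ℕ) (p : (ℤ → Fin κ) × X) (k : ℤ) :
    ((skewProd f)^[n] p).1 k = p.1 (n + k) := by
  induction n generalizing k with
  | zero => simp
  | succ n ih =>
    rw [Function.iterate_succ_apply']
    exact (ih (k + 1)).trans (congrArg p.1 (by push_cast; ring))

theorem snd_iterate_succ_skewProd (n : ℕ) (p : (ℤ → Fin κ) × X) :
    ((skewProd f)^[n + 1] p).2 = f (p.1 n) ((skewProd f)^[n] p).2 := by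
  rw [Function.iterate_succ_apply', skewProd, fst_iterate_skewProd, add_zero]

theorem snd_iterate_skewProd_eq_seqComp (n : ℕ) (p : (ℤ → Fin κ) × X) :
    ((skewProd f)^[n] p).2 = seqComp f (fun m : ℕ => p.1 m) n p.2 := by
  induction n with
  | zero => rfl
  | succ n ih => rw [snd_iterate_succ_skewProd, ih, seqComp, Function.comp_apply]

theorem snd_iterate_skewProd_eq_iterate {p : (ℤ → Fin κ) × X} {i : Fin κ}
    (hp : ∀ n : ℕ, p.1 n = i) (n : ℕ) : ((skewProd f)^[n] p).2 = (f i)^[n] p.2 := by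
  induction n with
  | zero => rfl
  | succ n ih => rw [snd_iterate_succ_skewProd, ih, hp, Function.iterate_succ_apply']

theorem snd_iterate_skewProd_eq_wordComp (w : List (Fin κ)) {p : (ℤ → Fin κ) × X}
    (hp : ∀ (k : ℕ) (hk : k < w.length), p.1 k = w[k]) :
    ((skewProd f)^[w.length] p).2 = wordComp f w p.2 := by
  induction w generalizing p with
  | nil => rfl
  | cons a w ih =>
    have hhead : p.1 0 = a := hp 0 (by simp)
    have htail : ∀ (k : ℕ) (hk : k < w.length), (skewProd f p).1 k = w[k] :=
      fun k hk => hp (k + 1) (by simpa using hk)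
    rw [List.length_cons, Function.iterate_succ_apply, ih htail, skewProd, hhead]
    rfl

theorem birkhoffAverage_skewProd_eq_of_forall_eq (ψ : X → ℝ) {p : (ℤ → Fin κ) × X} {i : Fin κ}
    (hp : ∀ n : ℕ, p.1 n = i) (n : ℕ) :
    birkhoffAverage ℝ (skewProd f) (ψ ∘ Prod.snd) n p = birkhoffAverage ℝ (f i) ψ n p.2 := by
  simp only [birkhoffAverage, birkhoffSum, Function.comp_apply,
    snd_iterate_skewProd_eq_iterate f hp]

theorem irregularSet_skewProd (ψ : X → ℝ) :
    irregularSet (skewProd f) (ψ ∘ Prod.snd) =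
      {p | ¬ ∃ l : ℝ, Tendsto (fun n : ℕ => (n : ℝ)⁻¹ *
        ∑ j ∈ Finset.range n, ψ (seqComp f (fun m : ℕ => p.1 (m : ℤ)) j p.2)) atTop (𝓝 l)} := by
  simp only [irregularSet, birkhoffAverage, birkhoffSum, Function.comp_apply, smul_eq_mul,
    snd_iterate_skewProd_eq_seqComp]

variable {f}

theorem isOpenMap_wordComp [TopologicalSpace X] (hf : ∀ i, IsOpenMap (f i)) (w : List (Fin κ)) :
    IsOpenMap (wordComp f w) := by
  induction w with
  | nil => exact IsOpenMap.id
  | cons a w ih => exact ih.comp (hf a)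

theorem continuous_skewProd [TopologicalSpace X] (hf : ∀ i, Continuous (f i)) :
    Continuous (skewProd f) := by
  have happly : Continuous fun q : Fin κ × X => f q.1 q.2 := continuous_prod_of_discrete_left.2 hf
  have hshift : Continuous (shiftZ : (ℤ → Fin κ) → ℤ → Fin κ) :=
    continuous_pi fun n => continuous_apply (n + 1)
  have hread : Continuous fun p : (ℤ → Fin κ) × X => (p.1 0, p.2) := by fun_prop
  exact (hshift.comp continuous_fst).prodMk (happly.comp hread)

end SkewProduct

section FrequentHittingTimes

open scoped BoundedContinuousFunction

variable {X : Type*} [MetricSpace X] {κ : ℕ} {f : Fin κ → X → X}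

theorem FrequentHittingTimes.exists_length_le_wordComp_mem (hfht : FrequentHittingTimes f)
    {W : Set X} (hW : IsOpen W) (hne : W.Nonempty) :
    ∃ K : ℕ, ∀ V : Set X, IsOpen V → V.Nonempty →
      ∃ w : List (Fin κ), w.length ≤ K ∧ ∃ x ∈ W, wordComp f w x ∈ V := by
  obtain ⟨x, hx⟩ := hne
  obtain ⟨ε, hε, hεW⟩ := Metric.isOpen_iff.1 hW x hx
  obtain ⟨K, hK⟩ := hfht ε hε
  refine ⟨K, fun V hV ⟨y, hy⟩ => ?_⟩
  obtain ⟨r, hr, hrV⟩ := Metric.isOpen_iff.1 hV y hy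
  obtain ⟨_, hwK, w, rfl, z, hz⟩ := hK x y (min r (ε / 2)) (by positivity) (min_le_right _ _)
  obtain ⟨⟨x', hx', rfl⟩, hzy⟩ := hz (mem_ball_self (by positivity))
  exact ⟨w, hwK, x', hεW hx', hrV (ball_subset_ball (min_le_left _ _) hzy)⟩

theorem FrequentHittingTimes.exists_le_iterate_skewProd_mem (hfht : FrequentHittingTimes f)
    (hopen : ∀ i, IsOpenMap (f i)) (i : Fin κ) {U : Set ((ℤ → Fin κ) × X)} (hU : IsOpen U)
    (hne : U.Nonempty) :
    ∃ M : ℕ, ∀ V : Set X, IsOpen V → V.Nonempty → ∃ q ≤ M, ∃ p ∈ U,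
      (∀ n : ℕ, ((skewProd f)^[q] p).1 n = i) ∧ ((skewProd f)^[q] p).2 ∈ V := by
  obtain ⟨⟨ω, x⟩, hp⟩ := hne
  obtain ⟨A, B, hA, hB, hωA, hxB, hAB⟩ := isOpen_prod_iff.1 hU ω x hp
  obtain ⟨v, hv⟩ := exists_forall_insertWord_append_mem hA hωA
  obtain ⟨K, hK⟩ := hfht.exists_length_le_wordComp_mem (isOpenMap_wordComp hopen v B hB)
    ⟨_, x, hxB, rfl⟩
  refine ⟨v.length + K, fun V hV hVne => ?_⟩
  obtain ⟨w, hwK, _, ⟨x₀, hx₀, rfl⟩, hwV⟩ := hK V hV hVne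
  refine ⟨(v ++ w).length, by simpa using hwK, (insertWord ω (v ++ w) i, x₀),
    hAB ⟨hv w i, hx₀⟩, fun n => ?_, ?_⟩
  · exact (fst_iterate_skewProd ..).trans (insertWord_length_add ω ..)
  · rw [snd_iterate_skewProd_eq_wordComp f (v ++ w) fun k hk => insertWord_natCast_of_lt ω i hk]
    simpa only [wordComp, List.foldl_append] using hwV

variable [MeasurableSpace X] [BorelSpace X]

theorem FrequentHittingTimes.frequently_lt_birkhoffAverage_skewProd_mem_residual
    (hfht : FrequentHittingTimes f) (hcont : ∀ i, Continuous (f i))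
    (hopen : ∀ i, IsOpenMap (f i)) (ψ : X →ᵇ ℝ) {i : Fin κ} {μ : Measure X}
    [IsProbabilityMeasure μ] (hμ : MeasurePreserving (f i) μ μ) {c : ℝ} (hc : c < ∫ x, ψ x ∂μ) :
    {p | ∃ᶠ n in atTop, c < birkhoffAverage ℝ (skewProd f) (ψ ∘ Prod.snd) n p} ∈
      residual ((ℤ → Fin κ) × X) := by
  obtain ⟨b, hcb, hb⟩ := exists_between hc
  refine frequently_lt_birkhoffAverage_mem_residual
    (φ := ψ.compContinuous ⟨Prod.snd, continuous_snd⟩) (continuous_skewProd hcont) hcb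
    fun U hU hne => ?_
  obtain ⟨M, hM⟩ := hfht.exists_le_iterate_skewProd_mem hopen i hU hne
  refine ⟨M, fun n hn => ?_⟩
  have hV : IsOpen {z | b < birkhoffAverage ℝ (f i) ψ n z} :=
    isOpen_lt continuous_const (continuous_birkhoffAverage (hcont i) ψ.continuous n)
  obtain ⟨z, hz⟩ := exists_integral_le_birkhoffAverage hμ (ψ.integrable μ) hn
  obtain ⟨q, hqM, p, hpU, hpi, hpV⟩ := hM _ hV ⟨z, hb.trans_le hz⟩
  exact ⟨q, hqM, p, hpU, hpV.trans_eq (birkhoffAverage_skewProd_eq_of_forall_eq f ψ hpi n).symm⟩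

theorem irregular_residual_skew_product_general (hcont : ∀ i, Continuous (f i))
    (hopen : ∀ i, IsOpenMap (f i)) (ψ : X →ᵇ ℝ) (hfht : FrequentHittingTimes f)
    (hcob : ∃ i, NotCoboundary (f i) ψ) :
    irregularSet (skewProd f) (ψ ∘ Prod.snd) ∈ residual ((ℤ → Fin κ) × X) := by
  obtain ⟨i, μ₁, μ₂, _, _, hμ₁, hμ₂, hlt⟩ := hcob
  obtain ⟨c₁, hc₁, hc₁'⟩ := exists_between hlt
  obtain ⟨c₂, hc₁₂, hc₂⟩ := exists_between hc₁'
  have hneg : -c₁ < ∫ x, (-ψ) x ∂μ₁ := by simpa [integral_neg] using hc₁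
  have hlow := hfht.frequently_lt_birkhoffAverage_skewProd_mem_residual hcont hopen (-ψ)
    ⟨(hcont i).measurable, hμ₁⟩ hneg
  have hhigh := hfht.frequently_lt_birkhoffAverage_skewProd_mem_residual hcont hopen ψ
    ⟨(hcont i).measurable, hμ₂⟩ hc₂
  filter_upwards [hlow, hhigh] with p hp₁ hp₂
  refine not_exists_tendsto_of_frequently_lt hc₁₂ (hp₁.mono fun n hn => ?_) hp₂
  rw [BoundedContinuousFunction.coe_neg, Pi.neg_comp, birkhoffAverage_neg] at hn
  exact neg_lt_neg_iff.1 hn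

end FrequentHittingTimes

/-- **Baire genericity of irregular points for the skew product.**
Let `f₁, …, f_κ` be bi-Lipschitz homeomorphisms of a compact metric space `X` generating a
semigroup action with frequent hitting times, and let `ψ` be continuous and not a coboundary
with respect to some generator. Then the irregular set `I_F(φ_ψ)` of the skew product
`F(ω,x) = (σ(ω), f_{ω₀}(x))` over the two-sided shift, i.e. the set of pairs `(ω,x)` whose
Birkhoff averages `(1/n) ∑_{j<n} ψ(f_ω^j(x))` do not converge, is a residual subset of
`Σ̂_κ × X`. -/
theorem irregular_residual_skew_product {X : Type*} [MetricSpace X] [CompactSpace X]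
    [MeasurableSpace X] [BorelSpace X] (κ : ℕ) (hκ : 1 ≤ κ)
    (f : Fin κ → X ≃ X)
    (hLip : ∀ i, ∃ L : NNReal, LipschitzWith L (f i))
    (hLipInv : ∀ i, ∃ L : NNReal, LipschitzWith L (f i).symm)
    (ψ : X → ℝ) (hψ : Continuous ψ)
    (hfht : FrequentHittingTimes (fun i => (f i : X → X)))
    (hcob : ∃ i, NotCoboundary (f i : X → X) ψ) :
    {p : (ℤ → Fin κ) × X | ¬ ∃ l : ℝ, Tendsto
        (fun n : ℕ => (n : ℝ)⁻¹ *
          ∑ j ∈ Finset.range n,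
            ψ (seqComp (fun i => (f i : X → X)) (fun m : ℕ => p.1 (m : ℤ)) j p.2))
        atTop (nhds l)}
      ∈ residual ((ℤ → Fin κ) × X) := by
  have hcont : ∀ i, Continuous (f i) := fun i => (hLip i).choose_spec.continuous
  have hopen : ∀ i, IsOpenMap (f i) := fun i =>
    (f i).continuous_symm_iff.1 (hLipInv i).choose_spec.continuous
  rw [← irregularSet_skewProd]
  exact irregular_residual_skew_product_general hcont hopen (.mkOfCompact ⟨ψ, hψ⟩) hfht hcob

end
end
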